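/- arXiv:0710.1283 — 3 statements merged into one kernel-verified Lean document; each statement's English description precedes it below -/
import Mathlib

section
/- There is an absolute constant C > 0 such that if two bi-infinite sequences α̂_1 = (a'_m)_{m∈ℤ} and α̂_2 = (a''_m)_{m∈ℤ} of positive integers satisfy a'_m = a''_m for all −n ≤ m ≤ n, then | f(α̂_1) − f(α̂_2) | ≤ C·2^{−n}, where f is the uniform limit of the functions f_n. -/
open MeasureTheory Filter Set Topology

noncomputable section

/-- The Gauss map `x ↦ {1/x}`. -/
def gaussMap (x : ℝ) : ℝ := Int.fract (1 / x)

/-- The `n`-th partial quotient (1-indexed) of the continued fraction expansion of `α`: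
`pq α n = ⌊1 / 𝒢^{n-1} α⌋`. -/
def pq (α : ℝ) (n : ℕ) : ℕ := ⌊1 / gaussMap^[n - 1] α⌋₊

/-- Denominators of the convergents attached to a (1-indexed) sequence of partial quotients:
`q 0 = 1`, `q 1 = b 1`, `q (n+2) = b (n+2) * q (n+1) + q n`. -/
def qden (b : ℕ → ℕ) : ℕ → ℕ
  | 0 => 1
  | 1 => b 1
  | n + 2 => b (n + 2) * qden b (n + 1) + qden b n

/-- Numerators of the convergents attached to a (1-indexed) sequence of partial quotients:
`p 0 = 0`, `p 1 = 1`, `p (n+2) = b (n+2) * p (n+1) + p n`. -/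
def pnum (b : ℕ → ℕ) : ℕ → ℕ
  | 0 => 0
  | 1 => 1
  | n + 2 => b (n + 2) * pnum b (n + 1) + pnum b n

/-- `n_R(α)`: the first index `n` with `q_n(α) > R`. -/
def nIndex (α : ℝ) (R : ℝ) : ℕ := sInf {n : ℕ | R < (qden (pq α) n : ℝ)}

/-- The Gauss measure on `(0,1)`, with density `1 / (ln 2 · (1 + x))`. -/
def gaussMeasure : Measure ℝ :=
  (volume.restrict (Ioo (0 : ℝ) 1)).withDensity fun x =>
    ENNReal.ofReal (1 / (Real.log 2 * (1 + x)))

/-- The domain `D = ((0,1) ∖ ℚ) × ((0,1) ∖ ℚ)` of the natural extension of the Gauss map. -/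
def Dset : Set (ℝ × ℝ) :=
  {p | p.1 ∈ Ioo (0 : ℝ) 1 ∧ Irrational p.1 ∧ p.2 ∈ Ioo (0 : ℝ) 1 ∧ Irrational p.2}

/-- The invariant measure `μ₂` on `D`, with density `1 / (ln 2 · (1 + x y)²)`. -/
def mu2 : Measure (ℝ × ℝ) :=
  (volume.restrict Dset).withDensity fun p =>
    ENNReal.ofReal (1 / (Real.log 2 * (1 + p.1 * p.2) ^ 2))

/-- The roof function `φ(x, y) = ln (⌊1/y⌋ + x)`. -/
def roof (p : ℝ × ℝ) : ℝ := Real.log ((⌊1 / p.2⌋ : ℝ) + p.1)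

/-- The natural extension of the Gauss map,
`Ĝ(x, y) = (1 / (⌊1/y⌋ + x), 1/y − ⌊1/y⌋)`. -/
def GhatMap (p : ℝ × ℝ) : ℝ × ℝ := (1 / ((⌊1 / p.2⌋ : ℝ) + p.1), Int.fract (1 / p.2))

/-- Birkhoff sums `S_r φ(p) = ∑_{i<r} φ(Ĝ^i p)` of the roof function under `Ĝ`. -/
def birk (p : ℝ × ℝ) (r : ℕ) : ℝ := ∑ i ∈ Finset.range r, roof (GhatMap^[i] p)

/-- `r(p, T)`: the first `r` with `S_r φ(p) > T`. -/
def rTime (p : ℝ × ℝ) (T : ℝ) : ℕ := sInf {r : ℕ | T < birk p r}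

/-- Value of a finite continued fraction `[b₁, b₂, …, bₘ] = 1/(b₁ + 1/(b₂ + ⋯ + 1/bₘ))`,
entries given as a list. -/
def cfList : List ℝ → ℝ
  | [] => 0
  | b :: t => 1 / (b + cfList t)

/-- The `m`-th truncation `[b 1, b 2, …, b m]` of an infinite continued fraction. -/
def cfTrunc (b : ℕ → ℝ) (m : ℕ) : ℝ := cfList ((List.range m).map fun i => b (i + 1))

/-- Value of the infinite continued fraction `[b 1, b 2, …]`, i.e. the limit of its finite
truncations. -/
def cfVal (b : ℕ → ℝ) : ℝ := limUnder atTop fun m => cfTrunc b m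

/-- The finite continued fraction on the reversed word,
`cfRev b k = [b k; b (k-1), …, b 1] = b k + 1/(b (k-1) + ⋯ + 1/(b 1))`. -/
def cfRev (b : ℕ → ℝ) (k : ℕ) : ℝ :=
  b k + cfList ((List.range (k - 1)).map fun i => b (k - 1 - i))

/-- For a bi-infinite sequence `a : ℤ → ℕ` of partial quotients,
`fn a n = ln q_n − ∑_{k=1}^n ln [a_k; a_{k-1}, a_{k-2}, …]`. -/
def fn (a : ℤ → ℕ) (n : ℕ) : ℝ :=
  Real.log (qden (fun k => a (k : ℤ)) n : ℝ) -
    ∑ k ∈ Finset.Icc 1 n,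
      Real.log ((a (k : ℤ) : ℝ) + cfVal fun j => (a ((k : ℤ) - (j : ℤ)) : ℝ))

/-- The bi-sided cylinder of length `n` in `D` prescribing the sequence coordinates
`a_k = b k` for `−n ≤ k ≤ n` (where `a_k`, `k ≥ 1`, are the partial quotients of the second
coordinate and `a_{−j}`, `j ≥ 0`, are the partial quotients of the first coordinate). -/
def cylinder (n : ℕ) (b : ℤ → ℕ) : Set (ℝ × ℝ) :=
  {p ∈ Dset | (∀ k : ℕ, 1 ≤ k → k ≤ n → pq p.2 k = b (k : ℤ)) ∧
    ∀ j : ℕ, j ≤ n → pq p.1 (j + 1) = b (-(j : ℤ))}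

/-- The phase space of the special flow over `Ĝ` with roof function `φ`. -/
def DPhi : Set ((ℝ × ℝ) × ℝ) := {q | q.1 ∈ Dset ∧ 0 ≤ q.2 ∧ q.2 < roof q.1}

/-- The invariant probability measure `μ₃` of the special flow. -/
def mu3 : Measure ((ℝ × ℝ) × ℝ) :=
  (ENNReal.ofReal (∫ p, roof p ∂mu2))⁻¹ • ((mu2.prod volume).restrict DPhi)

/-- The special flow `Φ_t` (for `t ≥ 0`) built over `Ĝ` with roof function `φ`:
`Φ_t(p, s) = (Ĝ^{r-1} p, s + t − S_{r-1} φ(p))` where `r = r(p, s + t)`. -/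
def flowMap (t : ℝ) (q : (ℝ × ℝ) × ℝ) : (ℝ × ℝ) × ℝ :=
  (GhatMap^[rTime q.1 (q.2 + t) - 1] q.1,
    q.2 + t - birk q.1 (rTime q.1 (q.2 + t) - 1))

end

/-!
Let `x = [a₀, a₋₁, a₋₂, …]` and `y = [a₁, a₂, a₃, …]`. The numbers `t_k = [a_k; a_{k-1}, …]` satisfy
`t₁ = a₁ + x` and `t_{k+1} = a_{k+1} + 1 / t_k`, so the products `t₁ ⋯ t_n` obey the recurrence of
the continuants and equal `q_n + x p_n`. Hence `f_n = -ln (1 + x p_n / q_n)`, whose limit is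
`f = -ln (1 + x y)`, a Lipschitz function of `(x, y) ∈ [0, 1]²`. Finally, prepending two partial
quotients contracts distances by a factor `4`, so `x` and `y` are determined up to `O(2^{-n})` by
their first `n` partial quotients.
-/

section ContinuedFractions

variable {b b' : ℕ → ℝ}

theorem cfTrunc_zero (b : ℕ → ℝ) : cfTrunc b 0 = 0 := rfl

theorem cfTrunc_succ (b : ℕ → ℝ) (m : ℕ) :
    cfTrunc b (m + 1) = 1 / (b 1 + cfTrunc (fun j => b (j + 1)) m) := by
  simp [cfTrunc, List.range_succ_eq_map, cfList, Function.comp_def]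

theorem cfTrunc_mem_Icc (hb : ∀ i ≥ 1, 1 ≤ b i) (m : ℕ) : cfTrunc b m ∈ Icc 0 1 := by
  induction m generalizing b with
  | zero => simp [cfTrunc_zero]
  | succ m ih =>
    have htail : 0 ≤ cfTrunc (fun j => b (j + 1)) m := (ih fun i _ => hb (i + 1) (by omega)).1
    have hden : 1 ≤ b 1 + cfTrunc (fun j => b (j + 1)) m := by linarith [hb 1 le_rfl]
    rw [cfTrunc_succ, mem_Icc]
    exact ⟨by positivity, div_le_one_of_le₀ hden (by positivity)⟩

theorem abs_cfTrunc_sub_cfTrunc_le_one (hb : ∀ i ≥ 1, 1 ≤ b i) (hb' : ∀ i ≥ 1, 1 ≤ b' i)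
    (M M' : ℕ) : |cfTrunc b M - cfTrunc b' M'| ≤ 1 :=
  Real.dist_le_of_mem_Icc_01 (cfTrunc_mem_Icc hb M) (cfTrunc_mem_Icc hb' M')

theorem abs_one_div_add_one_div_sub_le {c d u v : ℝ} (hc : 1 ≤ c) (hd : 1 ≤ d) (hu : 0 ≤ u)
    (hv : 0 ≤ v) : |1 / (c + 1 / (d + u)) - 1 / (c + 1 / (d + v))| ≤ |u - v| / 4 := by
  have two_le (w : ℝ) (hw : 0 ≤ w) : 2 ≤ c * (d + w) + 1 := by nlinarith
  have four_le : 4 ≤ (c * (d + u) + 1) * (c * (d + v) + 1) := by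
    nlinarith [two_le u hu, two_le v hv]
  have hdiff : 1 / (c + 1 / (d + u)) - 1 / (c + 1 / (d + v)) =
      (u - v) / ((c * (d + u) + 1) * (c * (d + v) + 1)) := by
    field_simp
    ring
  rw [hdiff, abs_div, abs_of_pos (by linarith : 0 < (c * (d + u) + 1) * (c * (d + v) + 1))]
  gcongr

theorem abs_cfTrunc_sub_cfTrunc_le {n M M' : ℕ} (hb : ∀ i ≥ 1, 1 ≤ b i) (hb' : ∀ i ≥ 1, 1 ≤ b' i)
    (hbb' : ∀ i ≥ 1, i ≤ n → b i = b' i) (hM : n ≤ M) (hM' : n ≤ M') :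
    |cfTrunc b M - cfTrunc b' M'| ≤ 2 * (1 / 2) ^ n := by
  induction n using Nat.twoStepInduction generalizing b b' M M' with
  | zero => linarith [abs_cfTrunc_sub_cfTrunc_le_one hb hb' M M']
  | one => linarith [abs_cfTrunc_sub_cfTrunc_le_one hb hb' M M']
  | more n ih _ =>
    obtain ⟨M, rfl⟩ : ∃ k, M = k + 2 := Nat.exists_eq_add_of_le' (by omega)
    obtain ⟨M', rfl⟩ : ∃ k, M' = k + 2 := Nat.exists_eq_add_of_le' (by omega)
    have htail : ∀ i ≥ 1, 1 ≤ b (i + 1 + 1) := fun i _ => hb _ (by omega)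
    have htail' : ∀ i ≥ 1, 1 ≤ b' (i + 1 + 1) := fun i _ => hb' _ (by omega)
    have hcontract := abs_one_div_add_one_div_sub_le (hb 1 le_rfl) (hb 2 (by omega))
      (cfTrunc_mem_Icc htail M).1 (cfTrunc_mem_Icc htail' M').1
    have htails := ih (M := M) (M' := M') htail htail'
      (fun i _ _ => hbb' _ (by omega) (by omega)) (by omega) (by omega)
    simp only [cfTrunc_succ, ← hbb' 1 le_rfl (by omega), ← hbb' (1 + 1) (by omega) (by omega)]
    rw [pow_add]
    linarith

theorem tendsto_cfTrunc_cfVal (hb : ∀ i ≥ 1, 1 ≤ b i) :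
    Tendsto (cfTrunc b) atTop (𝓝 (cfVal b)) := by
  have hlim : Tendsto (fun n : ℕ => 2 * (1 / 2 : ℝ) ^ n) atTop (𝓝 0) := by
    simpa using (tendsto_pow_atTop_nhds_zero_of_lt_one (r := (1 / 2 : ℝ))
      (by norm_num) (by norm_num)).const_mul 2
  have hcauchy : CauchySeq (cfTrunc b) := cauchySeq_of_le_tendsto_0 _
    (fun _ _ _ hM hM' => abs_cfTrunc_sub_cfTrunc_le hb hb (fun _ _ _ => rfl) hM hM') hlim
  exact hcauchy.tendsto_limUnder

theorem cfVal_mem_Icc (hb : ∀ i ≥ 1, 1 ≤ b i) : cfVal b ∈ Icc 0 1 :=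
  isClosed_Icc.mem_of_tendsto (tendsto_cfTrunc_cfVal hb) (.of_forall (cfTrunc_mem_Icc hb))

theorem cfVal_eq_one_div (hb : ∀ i ≥ 1, 1 ≤ b i) :
    cfVal b = 1 / (b 1 + cfVal fun j => b (j + 1)) := by
  have htail : ∀ i ≥ 1, 1 ≤ b (i + 1) := fun i _ => hb _ (by omega)
  have hden : b 1 + cfVal (fun j => b (j + 1)) ≠ 0 := by
    linarith [hb 1 le_rfl, (cfVal_mem_Icc htail).1]
  have hlim : Tendsto (fun m => cfTrunc b (m + 1)) atTop
      (𝓝 (1 / (b 1 + cfVal fun j => b (j + 1)))) := by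
    simp only [cfTrunc_succ]
    exact tendsto_const_nhds.div ((tendsto_cfTrunc_cfVal htail).const_add (b 1)) hden
  exact tendsto_nhds_unique ((tendsto_cfTrunc_cfVal hb).comp (tendsto_add_atTop_nat 1)) hlim

theorem abs_cfVal_sub_cfVal_le {n : ℕ} (hb : ∀ i ≥ 1, 1 ≤ b i) (hb' : ∀ i ≥ 1, 1 ≤ b' i)
    (hbb' : ∀ i ≥ 1, i ≤ n → b i = b' i) : |cfVal b - cfVal b'| ≤ 2 * (1 / 2) ^ n := by
  refine le_of_tendsto ((tendsto_cfTrunc_cfVal hb).sub (tendsto_cfTrunc_cfVal hb')).abs ?_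
  filter_upwards [eventually_ge_atTop n] with m hm
  exact abs_cfTrunc_sub_cfTrunc_le hb hb' hbb' hm hm

end ContinuedFractions

section Continuants

variable {b : ℕ → ℕ}

theorem pnum_succ (b : ℕ → ℕ) (m : ℕ) : pnum b (m + 1) = qden (fun j => b (j + 1)) m := by
  induction m using Nat.twoStepInduction with
  | zero => rfl
  | one => simp [pnum, qden]
  | more m ih ih' => rw [pnum, ih', ih, qden]

theorem qden_succ (b : ℕ → ℕ) (m : ℕ) :
    qden b (m + 1) = b 1 * qden (fun j => b (j + 1)) m + pnum (fun j => b (j + 1)) m := by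
  induction m using Nat.twoStepInduction with
  | zero => simp [qden, pnum]
  | one => simp [qden, pnum, mul_comm]
  | more m ih ih' =>
    rw [qden, ih', ih, qden, pnum]
    ring

theorem qden_pos (hb : ∀ i ≥ 1, 0 < b i) (m : ℕ) : 0 < qden b m := by
  induction m using Nat.twoStepInduction with
  | zero => exact Nat.one_pos
  | one => exact hb 1 le_rfl
  | more m ih _ => exact Nat.add_pos_right _ ih

theorem pnum_div_qden (hb : ∀ i ≥ 1, 0 < b i) (m : ℕ) :
    (pnum b m : ℝ) / qden b m = cfTrunc (fun j => b j) m := by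
  induction m generalizing b with
  | zero => simp [pnum, cfTrunc_zero]
  | succ m ih =>
    have htail : ∀ i ≥ 1, 0 < b (i + 1) := fun i _ => hb _ (by omega)
    have hq : (0 : ℝ) < qden (fun j => b (j + 1)) m := Nat.cast_pos.2 (qden_pos htail m)
    have hb₁ : (0 : ℝ) < b 1 := Nat.cast_pos.2 (hb 1 le_rfl)
    rw [cfTrunc_succ, ← ih htail, pnum_succ, qden_succ]
    push_cast
    field_simp

theorem tendsto_pnum_div_qden (hb : ∀ i ≥ 1, 0 < b i) :
    Tendsto (fun m => (pnum b m : ℝ) / qden b m) atTop (𝓝 (cfVal fun j => b j)) := by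
  simp only [pnum_div_qden hb]
  exact tendsto_cfTrunc_cfVal fun i hi => Nat.one_le_cast.2 (hb i hi)

theorem prod_Icc_eq_qden_add_mul_pnum {K : Type*} [Field K] {t : ℕ → K} {x : K}
    (ht₁ : t 1 = b 1 + x) (ht : ∀ k ≥ 1, t (k + 1) = b (k + 1) + 1 / t k)
    (ht₀ : ∀ k ≥ 1, t k ≠ 0) (n : ℕ) :
    ∏ k ∈ Finset.Icc 1 n, t k = qden b n + x * pnum b n := by
  induction n using Nat.twoStepInduction with
  | zero => simp [qden, pnum]
  | one => simp [qden, pnum, ht₁]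
  | more n ih ih' =>
    have hne : t (n + 1) ≠ 0 := ht₀ _ (by omega)
    calc ∏ k ∈ Finset.Icc 1 (n + 2), t k
        = b (n + 2) * ∏ k ∈ Finset.Icc 1 (n + 1), t k + ∏ k ∈ Finset.Icc 1 n, t k := by
          rw [Finset.prod_Icc_succ_top (by omega), ht (n + 1) (by omega),
            Finset.prod_Icc_succ_top (by omega)]
          field_simp
      _ = qden b (n + 2) + x * pnum b (n + 2) := by
          rw [ih', ih, qden, pnum]
          push_cast
          ring

end Continuants

section Lipschitz

theorem abs_log_sub_log_le {c u v : ℝ} (hc : 0 < c) (hu : c ≤ u) (hv : c ≤ v) :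
    |Real.log u - Real.log v| ≤ |u - v| / c := by
  wlog huv : v ≤ u generalizing u v
  · rw [abs_sub_comm, abs_sub_comm u]
    exact this hv hu (le_of_not_ge huv)
  have hv₀ : 0 < v := hc.trans_le hv
  have hu₀ : 0 < u := hc.trans_le hu
  rw [abs_of_nonneg (sub_nonneg.2 (Real.log_le_log hv₀ huv)), abs_of_nonneg (sub_nonneg.2 huv)]
  calc Real.log u - Real.log v = Real.log (u / v) := (Real.log_div hu₀.ne' hv₀.ne').symm
    _ ≤ u / v - 1 := Real.log_le_sub_one_of_pos (by positivity)
    _ = (u - v) / v := by field_simp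
    _ ≤ (u - v) / c := div_le_div_of_nonneg_left (sub_nonneg.2 huv) hc hv

theorem abs_log_one_add_mul_sub_le {x x' y y' : ℝ} (hx : 0 ≤ x) (hx' : x' ∈ Icc 0 1)
    (hy : y ∈ Icc 0 1) (hy' : 0 ≤ y') :
    |Real.log (1 + x * y) - Real.log (1 + x' * y')| ≤ |x - x'| + |y - y'| := by
  have one_le {s t : ℝ} (hs : 0 ≤ s) (ht : 0 ≤ t) : 1 ≤ 1 + s * t := by
    linarith [mul_nonneg hs ht]
  calc |Real.log (1 + x * y) - Real.log (1 + x' * y')|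
      ≤ |(1 + x * y) - (1 + x' * y')| := by
        simpa using abs_log_sub_log_le one_pos (one_le hx hy.1) (one_le hx'.1 hy')
    _ = |(x - x') * y + x' * (y - y')| := by ring_nf
    _ ≤ |x - x'| * y + x' * |y - y'| := by
        simpa [abs_mul, abs_of_nonneg hy.1, abs_of_nonneg hx'.1] using
          abs_add_le ((x - x') * y) (x' * (y - y'))
    _ ≤ |x - x'| + |y - y'| := add_le_add (mul_le_of_le_one_right (abs_nonneg _) hy.2)
        (mul_le_of_le_one_left (abs_nonneg _) hx'.2)

end Lipschitz

/-- The value `[a_{k-1}, a_{k-2}, …]` of the continued fraction read off a bi-infinite sequence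
backwards from (and excluding) position `k`. -/
noncomputable def backwardCF (a : ℤ → ℕ) (k : ℤ) : ℝ := cfVal fun j => a (k - j)

/-- The value `[a_1, a_2, …]` of the continued fraction read off a bi-infinite sequence forwards
from position `1`. -/
noncomputable def forwardCF (a : ℤ → ℕ) : ℝ := cfVal fun j => a j

section BiInfinite

variable {a a' : ℤ → ℕ}

theorem backwardCF_mem_Icc (ha : ∀ m, 0 < a m) (k : ℤ) : backwardCF a k ∈ Icc 0 1 :=
  cfVal_mem_Icc fun _ _ => Nat.one_le_cast.2 (ha _)

theorem forwardCF_mem_Icc (ha : ∀ m, 0 < a m) : forwardCF a ∈ Icc 0 1 :=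
  cfVal_mem_Icc fun _ _ => Nat.one_le_cast.2 (ha _)

theorem backwardCF_add_one (ha : ∀ m, 0 < a m) (k : ℤ) :
    backwardCF a (k + 1) = 1 / (a k + backwardCF a k) := by
  have hrec := cfVal_eq_one_div (b := fun j => (a (k + 1 - j) : ℝ))
    fun _ _ => Nat.one_le_cast.2 (ha _)
  simpa [backwardCF] using hrec

theorem prod_add_backwardCF (ha : ∀ m, 0 < a m) (n : ℕ) :
    ∏ k ∈ Finset.Icc 1 n, ((a (k : ℤ) : ℝ) + backwardCF a k) =
      qden (fun k => a k) n + backwardCF a 1 * pnum (fun k => a k) n := by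
  refine prod_Icc_eq_qden_add_mul_pnum (b := fun k => a k)
    (t := fun k => a k + backwardCF a k) (by simp) (fun k _ => ?_) (fun k _ => ?_) n
  · simp [← backwardCF_add_one ha]
  · have := Nat.cast_pos (α := ℝ).2 (ha k)
    linarith [(backwardCF_mem_Icc ha k).1]

theorem fn_eq_neg_log (ha : ∀ m, 0 < a m) (n : ℕ) :
    fn a n = -Real.log (1 + backwardCF a 1 *
      ((pnum (fun k => a k) n : ℝ) / qden (fun k => a k) n)) := by
  have hq : (0 : ℝ) < qden (fun k => a k) n := Nat.cast_pos.2 (qden_pos (fun _ _ => ha _) n)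
  have ht (k : ℕ) : 0 < (a k : ℝ) + backwardCF a k :=
    add_pos_of_pos_of_nonneg (Nat.cast_pos.2 (ha k)) (backwardCF_mem_Icc ha k).1
  have hprod_pos := Finset.prod_pos (s := Finset.Icc 1 n) fun k _ => ht k
  calc fn a n
      = Real.log (qden (fun k => a k) n) -
          Real.log (∏ k ∈ Finset.Icc 1 n, ((a k : ℝ) + backwardCF a k)) := by
        rw [Real.log_prod fun k _ => (ht k).ne']
        rfl
    _ = -Real.log ((∏ k ∈ Finset.Icc 1 n, ((a k : ℝ) + backwardCF a k)) /
          qden (fun k => a k) n) := by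
        rw [Real.log_div hprod_pos.ne' hq.ne', neg_sub]
    _ = -Real.log (1 + backwardCF a 1 *
          ((pnum (fun k => a k) n : ℝ) / qden (fun k => a k) n)) := by
        rw [prod_add_backwardCF ha, add_div, div_self hq.ne', mul_div_assoc]

theorem tendsto_fn (ha : ∀ m, 0 < a m) :
    Tendsto (fn a) atTop (𝓝 (-Real.log (1 + backwardCF a 1 * forwardCF a))) := by
  have hne : 1 + backwardCF a 1 * forwardCF a ≠ 0 := by
    linarith [mul_nonneg (backwardCF_mem_Icc ha 1).1 (forwardCF_mem_Icc ha).1]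
  have hratio := tendsto_pnum_div_qden (b := fun k => a k) fun _ _ => ha _
  exact (((hratio.const_mul _).const_add 1).log hne).neg.congr fun n => (fn_eq_neg_log ha n).symm

theorem abs_backwardCF_sub_backwardCF_le {k : ℤ} {n : ℕ} (ha : ∀ m, 0 < a m)
    (ha' : ∀ m, 0 < a' m) (h : ∀ m, k - n ≤ m → m < k → a m = a' m) :
    |backwardCF a k - backwardCF a' k| ≤ 2 * (1 / 2) ^ n :=
  abs_cfVal_sub_cfVal_le (fun _ _ => Nat.one_le_cast.2 (ha _))
    (fun _ _ => Nat.one_le_cast.2 (ha' _)) fun i _ _ => by rw [h _ (by omega) (by omega)]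

theorem abs_forwardCF_sub_forwardCF_le {n : ℕ} (ha : ∀ m, 0 < a m) (ha' : ∀ m, 0 < a' m)
    (h : ∀ m : ℤ, 1 ≤ m → m ≤ n → a m = a' m) :
    |forwardCF a - forwardCF a'| ≤ 2 * (1 / 2) ^ n :=
  abs_cfVal_sub_cfVal_le (fun _ _ => Nat.one_le_cast.2 (ha _))
    (fun _ _ => Nat.one_le_cast.2 (ha' _)) fun i _ _ => by rw [h _ (by omega) (by omega)]

end BiInfinite

/-- If `f` is the (pointwise, hence uniform) limit of the functions `f_n`,
then there is an absolute constant `C > 0` such that whenever two bi-infinite sequences of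
positive integers agree on all coordinates `−n ≤ m ≤ n`, `|f(α̂₁) − f(α̂₂)| ≤ C·2^{−n}`. -/
theorem statement8 (f : (ℤ → ℕ) → ℝ)
    (hf : ∀ a : ℤ → ℕ, (∀ m : ℤ, 0 < a m) →
      Filter.Tendsto (fun n => fn a n) Filter.atTop (nhds (f a))) :
    ∃ C > (0 : ℝ), ∀ (n : ℕ) (a₁ a₂ : ℤ → ℕ), (∀ m : ℤ, 0 < a₁ m) → (∀ m : ℤ, 0 < a₂ m) →
      (∀ m : ℤ, -(n : ℤ) ≤ m → m ≤ (n : ℤ) → a₁ m = a₂ m) →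
      |f a₁ - f a₂| ≤ C * (2 : ℝ) ^ (-(n : ℤ)) := by
  refine ⟨4, by norm_num, fun n a₁ a₂ h₁ h₂ h => ?_⟩
  have hf_eq (a : ℤ → ℕ) (ha : ∀ m, 0 < a m) :
      f a = -Real.log (1 + backwardCF a 1 * forwardCF a) :=
    tendsto_nhds_unique (hf a ha) (tendsto_fn ha)
  rw [hf_eq a₁ h₁, hf_eq a₂ h₂, neg_sub_neg, abs_sub_comm]
  calc |Real.log (1 + backwardCF a₁ 1 * forwardCF a₁) -
        Real.log (1 + backwardCF a₂ 1 * forwardCF a₂)|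
      ≤ |backwardCF a₁ 1 - backwardCF a₂ 1| + |forwardCF a₁ - forwardCF a₂| :=
        abs_log_one_add_mul_sub_le (backwardCF_mem_Icc h₁ 1).1 (backwardCF_mem_Icc h₂ 1)
          (forwardCF_mem_Icc h₁) (forwardCF_mem_Icc h₂).1
    _ ≤ 2 * (1 / 2) ^ n + 2 * (1 / 2) ^ n :=
        add_le_add
          (abs_backwardCF_sub_backwardCF_le h₁ h₂ fun m _ _ => h m (by omega) (by omega))
          (abs_forwardCF_sub_forwardCF_le h₁ h₂ fun m _ _ => h m (by omega) (by omega))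
    _ = 4 * (2 : ℝ) ^ (-(n : ℤ)) := by
        rw [zpow_neg, zpow_natCast, one_div, inv_pow]
        ring
end

section
/- The measure μ2 on D with density ρ2(x,y) = 1/(ln 2 · (1+xy)²) is invariant under the natural extension Ĝ of the Gauss map: for every measurable A ⊆ D, μ2(Ĝ^{−1}(A)) = μ2(A). -/
open MeasureTheory Filter Set Topology

/-!
Followed by the exchange of the two coordinates, `Ĝ` becomes an involution of `D`, so `Ĝ` is a
bijection of `D`. On the strip where `⌊1/y⌋ = n` it is the product of the inverse branch
`x ↦ 1/(n + x)` and of the branch `y ↦ 1/y - n` of the Gauss map, with Jacobian `((n + x) y)⁻²`.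
Since the image `(x', y')` of `(x, y)` satisfies `1 + x' y' = (1 + x y) / ((n + x) y)`, this
Jacobian is exactly the factor by which `(1 + x y)⁻²` changes, and the change of variables formula
concludes.
-/

theorem measurePreserving_withDensity_of_bijOn {E : Type*} [NormedAddCommGroup E]
    [NormedSpace ℝ E] [FiniteDimensional ℝ E] [MeasurableSpace E] [BorelSpace E]
    {μ : Measure E} [μ.IsAddHaarMeasure]
    {f : E → E} {f' : E → E →L[ℝ] E} {s t : Set E} {ρ σ : E → ENNReal} (hf : Measurable f)
    (hs : MeasurableSet s) (hf' : ∀ x ∈ s, HasFDerivWithinAt f (f' x) s x) (hbij : BijOn f s t)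
    (hρ : ∀ x ∈ s, ENNReal.ofReal |(f' x).det| * σ (f x) = ρ x) :
    MeasurePreserving f ((μ.restrict s).withDensity ρ) ((μ.restrict t).withDensity σ) := by
  refine ⟨hf, Measure.ext fun A hA => ?_⟩
  have himage : f '' (f ⁻¹' A ∩ s) = A ∩ t := by rw [image_preimage_inter, hbij.image_eq]
  have hsub : f ⁻¹' A ∩ s ⊆ s := inter_subset_right
  have hmeas : MeasurableSet (f ⁻¹' A ∩ s) := (hf hA).inter hs
  rw [Measure.map_apply hf hA, withDensity_apply _ (hf hA), withDensity_apply _ hA,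
    Measure.restrict_restrict (hf hA), Measure.restrict_restrict hA]
  calc ∫⁻ x in f ⁻¹' A ∩ s, ρ x ∂μ
      = ∫⁻ x in f ⁻¹' A ∩ s, ENNReal.ofReal |(f' x).det| * σ (f x) ∂μ :=
        setLIntegral_congr_fun hmeas fun x hx => (hρ x (hsub hx)).symm
    _ = ∫⁻ y in f '' (f ⁻¹' A ∩ s), σ y ∂μ :=
        (lintegral_image_eq_lintegral_abs_det_fderiv_mul μ hmeas
          (fun x hx => (hf' x (hsub hx)).mono hsub) (hbij.injOn.mono hsub) σ).symm
    _ = ∫⁻ y in A ∩ t, σ y ∂μ := by rw [himage]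

theorem det_prodMap_toSpanSingleton {R : Type*} [CommRing R] [TopologicalSpace R]
    [ContinuousMul R] (a b : R) :
    ((ContinuousLinearMap.toSpanSingleton R a).prodMap
      (ContinuousLinearMap.toSpanSingleton R b)).det = a * b := by
  rw [ContinuousLinearMap.det, ContinuousLinearMap.coe_prodMap, LinearMap.det_prodMap]
  exact congrArg₂ (· * ·) (ContinuousLinearMap.det_toSpanSingleton a)
    (ContinuousLinearMap.det_toSpanSingleton b)

theorem irrational_fract {x : ℝ} (hx : Irrational x) : Irrational (Int.fract x) :=
  hx.sub_intCast _

theorem eventually_floor_eq {x : ℝ} (hx : Int.fract x ≠ 0) : ∀ᶠ y in 𝓝 x, ⌊y⌋ = ⌊x⌋ := by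
  have hlt : (⌊x⌋ : ℝ) < x := sub_pos.1 ((Int.fract_nonneg x).lt_of_ne' hx)
  filter_upwards [Ioo_mem_nhds hlt (Int.lt_floor_add_one x)] with y hy
  exact Int.floor_eq_iff.2 ⟨hy.1.le, hy.2⟩

theorem one_le_floor_one_div {y : ℝ} (h0 : 0 < y) (h1 : y ≤ 1) : 1 ≤ ⌊1 / y⌋ :=
  Int.le_floor.2 (by rw [Int.cast_one]; exact (one_le_div h0).2 h1)

/-- The inverse branch `x ↦ 1 / (n + x)` of the Gauss map whose values have first partial
quotient `n`. -/
noncomputable def gaussBranch (n : ℤ) (x : ℝ) : ℝ := 1 / ((n : ℝ) + x)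

theorem one_div_gaussBranch (n : ℤ) (x : ℝ) : 1 / gaussBranch n x = n + x :=
  one_div_one_div _

theorem floor_one_div_gaussBranch (n : ℤ) {x : ℝ} (hx : x ∈ Ico (0 : ℝ) 1) :
    ⌊1 / gaussBranch n x⌋ = n := by
  rw [one_div_gaussBranch, Int.floor_intCast_add, Int.floor_eq_zero_iff.2 hx, add_zero]

theorem gaussMap_gaussBranch (n : ℤ) {x : ℝ} (hx : x ∈ Ico (0 : ℝ) 1) :
    gaussMap (gaussBranch n x) = x := by
  rw [gaussMap, one_div_gaussBranch, Int.fract_intCast_add, Int.fract_eq_self.2 hx]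

theorem gaussBranch_gaussMap (y : ℝ) : gaussBranch ⌊1 / y⌋ (gaussMap y) = y := by
  rw [gaussBranch, gaussMap, Int.floor_add_fract, one_div_one_div]

theorem measurable_gaussMap : Measurable gaussMap :=
  (measurable_id.const_div 1).fract

theorem hasDerivAt_gaussBranch {n : ℤ} {x : ℝ} (hx : (n : ℝ) + x ≠ 0) :
    HasDerivAt (gaussBranch n) (-1 / ((n : ℝ) + x) ^ 2) x := by
  unfold gaussBranch
  simpa only [one_div, id] using ((hasDerivAt_id x).const_add (n : ℝ)).fun_inv hx

theorem hasDerivAt_gaussMap {y : ℝ} (hy : y ≠ 0) (hfract : gaussMap y ≠ 0) :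
    HasDerivAt gaussMap (-1 / y ^ 2) y := by
  have hbranch : HasDerivAt (fun z : ℝ => 1 / z - ⌊1 / y⌋) (-1 / y ^ 2) y := by
    simpa only [one_div, id] using ((hasDerivAt_id y).fun_inv hy).sub_const (⌊1 / y⌋ : ℝ)
  have hfloor : ∀ᶠ z in 𝓝 y, ⌊1 / z⌋ = ⌊1 / y⌋ :=
    (continuousAt_const.div continuousAt_id hy).eventually (eventually_floor_eq hfract)
  refine hbranch.congr_of_eventuallyEq ?_
  filter_upwards [hfloor] with z hz
  rw [gaussMap, Int.fract, hz]

/-- The irrational points of `(0, 1)`, on which every iterate of the Gauss map is smooth; the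
domain `D` is the square of this set. -/
def unitIrrationals : Set ℝ := Ioo 0 1 ∩ {x | Irrational x}

theorem dset_eq_prod : Dset = unitIrrationals ×ˢ unitIrrationals :=
  Set.ext fun _ => (and_assoc (b := Irrational _)).symm

theorem measurableSet_unitIrrationals : MeasurableSet unitIrrationals :=
  measurableSet_Ioo.inter IsGδ.setOfPred_irrational.measurableSet

theorem measurableSet_dset : MeasurableSet Dset :=
  dset_eq_prod ▸ measurableSet_unitIrrationals.prod measurableSet_unitIrrationals

theorem mapsTo_gaussMap : MapsTo gaussMap unitIrrationals unitIrrationals := by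
  rintro y ⟨-, hy⟩
  have hirr : Irrational (gaussMap y) :=
    irrational_fract (by rw [one_div]; exact irrational_inv_iff.2 hy)
  exact ⟨⟨(Int.fract_nonneg _).lt_of_ne' hirr.ne_zero, Int.fract_lt_one _⟩, hirr⟩

theorem mapsTo_gaussBranch {n : ℤ} (hn : 1 ≤ n) :
    MapsTo (gaussBranch n) unitIrrationals unitIrrationals := by
  rintro x ⟨⟨hx, -⟩, hirr⟩
  have hn' : (1 : ℝ) ≤ n := by exact_mod_cast hn
  have hgt : 1 < (n : ℝ) + x := by linarith
  refine ⟨⟨one_div_pos.2 (by linarith), (div_lt_one (by linarith)).2 hgt⟩, ?_⟩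
  change Irrational (1 / ((n : ℝ) + x))
  rw [one_div]
  exact irrational_inv_iff.2 (hirr.intCast_add n)

theorem ghatMap_eq (p : ℝ × ℝ) : GhatMap p = (gaussBranch ⌊1 / p.2⌋ p.1, gaussMap p.2) :=
  rfl

theorem measurable_ghatMap : Measurable GhatMap := by
  have hfloor : Measurable fun p : ℝ × ℝ => (⌊1 / p.2⌋ : ℝ) :=
    measurable_from_top.comp (measurable_snd.const_div 1).floor
  exact ((hfloor.add measurable_fst).const_div 1).prodMk (measurable_gaussMap.comp measurable_snd)

theorem swap_ghatMap_swap_ghatMap {p : ℝ × ℝ} (hp : p.1 ∈ Ico (0 : ℝ) 1) :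
    (GhatMap (GhatMap p).swap).swap = p := by
  simp only [ghatMap_eq, Prod.swap, floor_one_div_gaussBranch _ hp, gaussMap_gaussBranch _ hp,
    gaussBranch_gaussMap]

theorem mapsTo_ghatMap : MapsTo GhatMap Dset Dset := by
  rw [dset_eq_prod]
  rintro p ⟨hx, hy⟩
  exact ⟨mapsTo_gaussBranch (one_le_floor_one_div hy.1.1 hy.1.2.le) hx, mapsTo_gaussMap hy⟩

theorem bijOn_ghatMap : BijOn GhatMap Dset Dset := by
  have hswap : MapsTo Prod.swap Dset Dset := fun p ⟨hx, hx', hy, hy'⟩ => ⟨hy, hy', hx, hx'⟩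
  have hinv : ∀ p ∈ Dset, (GhatMap (GhatMap p).swap).swap = p := fun p hp =>
    swap_ghatMap_swap_ghatMap (Ioo_subset_Ico_self hp.1)
  have hinvOn : InvOn (Prod.swap ∘ GhatMap ∘ Prod.swap) GhatMap Dset Dset :=
    ⟨hinv, fun p hp => Prod.swap_injective (hinv p.swap (hswap hp))⟩
  exact hinvOn.bijOn mapsTo_ghatMap (hswap.comp (mapsTo_ghatMap.comp hswap))

/-- The derivative of `GhatMap` at `p`, diagonal because the integer `⌊1 / p.2⌋` is locally
constant. -/
noncomputable def ghatDeriv (p : ℝ × ℝ) : ℝ × ℝ →L[ℝ] ℝ × ℝ :=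
  (ContinuousLinearMap.toSpanSingleton ℝ (-1 / ((⌊1 / p.2⌋ : ℝ) + p.1) ^ 2)).prodMap
    (ContinuousLinearMap.toSpanSingleton ℝ (-1 / p.2 ^ 2))

theorem abs_det_ghatDeriv (p : ℝ × ℝ) :
    |(ghatDeriv p).det| = 1 / (((⌊1 / p.2⌋ : ℝ) + p.1) * p.2) ^ 2 := by
  have hdet : (ghatDeriv p).det = 1 / (((⌊1 / p.2⌋ : ℝ) + p.1) * p.2) ^ 2 := by
    rw [ghatDeriv, det_prodMap_toSpanSingleton, div_mul_div_comm, mul_pow, neg_one_mul, neg_neg]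
  rw [hdet, abs_of_nonneg (by positivity)]

theorem hasFDerivAt_ghatMap {p : ℝ × ℝ} (hx : (⌊1 / p.2⌋ : ℝ) + p.1 ≠ 0) (hy : p.2 ≠ 0)
    (hfract : gaussMap p.2 ≠ 0) : HasFDerivAt GhatMap (ghatDeriv p) p := by
  have hfloor : ∀ᶠ q : ℝ × ℝ in 𝓝 p, ⌊1 / q.2⌋ = ⌊1 / p.2⌋ :=
    (continuousAt_const.div continuousAt_snd hy).eventually (eventually_floor_eq hfract)
  refine (HasFDerivAt.prodMap p (hasDerivAt_gaussBranch hx).hasFDerivAt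
    (hasDerivAt_gaussMap hy hfract).hasFDerivAt).congr_of_eventuallyEq ?_
  filter_upwards [hfloor] with q hq
  rw [ghatMap_eq, hq, Prod.map]

theorem one_add_ghatMap_fst_mul_snd {p : ℝ × ℝ} (hx : (⌊1 / p.2⌋ : ℝ) + p.1 ≠ 0)
    (hy : p.2 ≠ 0) :
    1 + (GhatMap p).1 * (GhatMap p).2 =
      (1 + p.1 * p.2) / (((⌊1 / p.2⌋ : ℝ) + p.1) * p.2) := by
  simp only [GhatMap, Int.fract]
  generalize (⌊1 / p.2⌋ : ℝ) = n at *
  field_simp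
  ring

theorem abs_det_ghatDeriv_mul_density {p : ℝ × ℝ} (hx : (⌊1 / p.2⌋ : ℝ) + p.1 ≠ 0)
    (hy : p.2 ≠ 0) :
    |(ghatDeriv p).det| * (1 / (Real.log 2 * (1 + (GhatMap p).1 * (GhatMap p).2) ^ 2)) =
      1 / (Real.log 2 * (1 + p.1 * p.2) ^ 2) := by
  rw [abs_det_ghatDeriv, one_add_ghatMap_fst_mul_snd hx hy]
  field_simp

theorem measurePreserving_ghatMap : MeasurePreserving GhatMap mu2 mu2 := by
  have hdenom : ∀ p ∈ Dset, (⌊1 / p.2⌋ : ℝ) + p.1 ≠ 0 := fun p ⟨hx, _, hy, _⟩ => by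
    have hfloor : (1 : ℝ) ≤ ⌊1 / p.2⌋ := by exact_mod_cast one_le_floor_one_div hy.1 hy.2.le
    linarith [hx.1]
  have hsnd : ∀ p ∈ Dset, p.2 ≠ 0 := fun p hp => hp.2.2.2.ne_zero
  have hderiv : ∀ p ∈ Dset, HasFDerivWithinAt GhatMap (ghatDeriv p) Dset p := fun p hp =>
    (hasFDerivAt_ghatMap (hdenom p hp) (hsnd p hp)
      (mapsTo_ghatMap hp).2.2.2.ne_zero).hasFDerivWithinAt
  refine measurePreserving_withDensity_of_bijOn measurable_ghatMap measurableSet_dset hderiv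
    bijOn_ghatMap fun p hp => ?_
  rw [← ENNReal.ofReal_mul (abs_nonneg _),
    abs_det_ghatDeriv_mul_density (hdenom p hp) (hsnd p hp)]

/-- The measure `μ₂` with density `1/(ln 2 · (1+xy)²)` on `D` is invariant
under the natural extension `Ĝ` of the Gauss map. -/
theorem statement12 (A : Set (ℝ × ℝ)) (hA : MeasurableSet A) :
    mu2 (GhatMap ⁻¹' A) = mu2 A :=
  measurePreserving_ghatMap.measure_preimage hA.nullMeasurableSet
end

section
/- The function φ(x,y) = ln(⌊1/y⌋ + x) is integrable with respect to μ2: ∫_{(0,1)²} ln(⌊1/y⌋ + x) · (ln 2 · (1+xy)²)^{−1} dx dy < ∞. -/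
open MeasureTheory Filter Set Topology

/-! The density of `μ₂` is at most `1 / ln 2` on the unit square, so it suffices to integrate `φ`
against Lebesgue measure there. Since `1 ≤ ⌊1/y⌋ + x ≤ 2/y`, the roof function is dominated by
`ln 2 - ln y`, and the logarithm is integrable on `(0, 1]`. -/

theorem integrableOn_prod_comp_snd {α β E : Type*} [MeasurableSpace α] [MeasurableSpace β]
    [NormedAddCommGroup E] {μ : Measure α} {ν : Measure β} [SFinite μ] [SFinite ν]
    {s : Set α} {t : Set β} {f : β → E} (hf : IntegrableOn f t ν) (hs : μ s ≠ ⊤) :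
    IntegrableOn (fun p : α × β => f p.2) (s ×ˢ t) (μ.prod ν) := by
  have : IsFiniteMeasure (μ.restrict s) := isFiniteMeasure_restrict.2 hs
  rw [IntegrableOn, ← Measure.prod_restrict]
  exact hf.comp_snd (μ.restrict s)

section OrderedField

variable {K : Type*} [Field K] [LinearOrder K] [IsStrictOrderedRing K]

theorem one_div_mul_one_add_sq_le {c t : K} (hc : 0 < c) (ht : 0 ≤ t) :
    1 / (c * (1 + t) ^ 2) ≤ 1 / c :=
  one_div_le_one_div_of_le hc
    (le_mul_of_one_le_right hc.le (one_le_pow₀ (le_add_of_nonneg_right ht)))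

variable [FloorRing K]

theorem one_le_floor_one_div_add {x y : K} (hx : 0 ≤ x) (hy : y ∈ Ioc (0 : K) 1) :
    1 ≤ (⌊1 / y⌋ : K) + x := by
  have hfloor : (1 : ℤ) ≤ ⌊1 / y⌋ := Int.floor_pos.2 (one_le_one_div hy.1 hy.2)
  have hcast : (1 : K) ≤ ⌊1 / y⌋ := by exact_mod_cast hfloor
  linarith

theorem floor_one_div_add_le_two_div {x y : K} (hx : x ≤ 1) (hy : y ∈ Ioc (0 : K) 1) :
    (⌊1 / y⌋ : K) + x ≤ 2 / y :=
  calc (⌊1 / y⌋ : K) + x ≤ 1 / y + 1 / y :=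
        add_le_add (Int.floor_le _) (hx.trans (one_le_one_div hy.1 hy.2))
    _ = 2 / y := by ring

end OrderedField

theorem measurable_roof : Measurable roof := by
  unfold roof
  fun_prop

theorem roof_nonneg {x y : ℝ} (hx : 0 ≤ x) (hy : y ∈ Ioc (0 : ℝ) 1) : 0 ≤ roof (x, y) :=
  Real.log_nonneg (one_le_floor_one_div_add hx hy)

theorem roof_le_log_two_sub_log {x y : ℝ} (hx : x ∈ Icc (0 : ℝ) 1) (hy : y ∈ Ioc (0 : ℝ) 1) :
    roof (x, y) ≤ Real.log 2 - Real.log y := by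
  rw [← Real.log_div two_ne_zero hy.1.ne']
  exact Real.log_le_log (zero_lt_one.trans_le (one_le_floor_one_div_add hx.1 hy))
    (floor_one_div_add_le_two_div hx.2 hy)

theorem integrableOn_roof : IntegrableOn roof (Icc (0 : ℝ) 1 ×ˢ Ioc (0 : ℝ) 1) := by
  have hlog : IntegrableOn (fun y : ℝ => Real.log 2 - Real.log y) (Ioc 0 1) :=
    (integrableOn_const measure_Ioc_lt_top.ne).sub intervalIntegral.intervalIntegrable_log'.1
  have hdom : IntegrableOn (fun p : ℝ × ℝ => Real.log 2 - Real.log p.2)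
      (Icc (0 : ℝ) 1 ×ˢ Ioc (0 : ℝ) 1) :=
    integrableOn_prod_comp_snd hlog measure_Icc_lt_top.ne
  refine hdom.mono' measurable_roof.aestronglyMeasurable
    (ae_restrict_of_forall_mem (measurableSet_Icc.prod measurableSet_Ioc) ?_)
  rintro ⟨x, y⟩ ⟨hx, hy⟩
  rw [Real.norm_of_nonneg (roof_nonneg hx.1 hy)]
  exact roof_le_log_two_sub_log hx hy

theorem Dset_subset_Icc_prod_Ioc : Dset ⊆ Icc (0 : ℝ) 1 ×ˢ Ioc (0 : ℝ) 1 :=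
  fun _ ⟨hx, _, hy, _⟩ => ⟨Ioo_subset_Icc_self hx, Ioo_subset_Ioc_self hy⟩

theorem mu2_le_smul_volume_restrict :
    mu2 ≤ ENNReal.ofReal (1 / Real.log 2) • volume.restrict Dset := by
  rw [mu2, ← withDensity_const]
  refine withDensity_mono (ae_restrict_of_ae_restrict_of_subset Dset_subset_Icc_prod_Ioc
    (ae_restrict_of_forall_mem (measurableSet_Icc.prod measurableSet_Ioc) ?_))
  rintro ⟨x, y⟩ ⟨hx, hy⟩
  exact ENNReal.ofReal_le_ofReal
    (one_div_mul_one_add_sq_le (Real.log_pos one_lt_two) (mul_nonneg hx.1 hy.1.le))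

/-- The roof function `φ(x,y) = ln(⌊1/y⌋ + x)` is integrable with respect
to `μ₂`. -/
theorem statement16 : Integrable roof mu2 := by
  have hroof : IntegrableOn roof Dset := integrableOn_roof.mono_set Dset_subset_Icc_prod_Ioc
  exact hroof.of_measure_le_smul ENNReal.ofReal_ne_top mu2_le_smul_volume_restrict
end
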